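/- arXiv:math/0602180 — 2 statements merged into one kernel-verified Lean document; each statement's English description precedes it below -/
import Mathlib

section
/- Let (L,M,N,P,λ,λ',μ,ν,h) be a crossed square, with ∂₁ : M ⋊ N → P, ∂₁(m,n) = μ(m)·ν(n) (N acting on M via ν) and Peiffer lifting {(m,n),(c,a)} := h(m, n·a·n⁻¹). Then axiom 2CM3(i) holds: for all x, x', x'' ∈ M ⋊ N, {x·x', x''} = (^{∂₁(x)}{x', x''})·{x, x'·x''·x'⁻¹} in L, where P acts on L by the given action. -/
/-- A crossed square of groups `(L,M,N,P,λ,λ',μ,ν,h)`: the four maps form a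
commutative square over `P`, all of `μ`, `ν`, `μ∘λ`, `λ` (with `M` acting on `L`
via `μ`) and `λ'` (with `N` acting on `L` via `ν`) are crossed modules, `λ`, `λ'`
are `P`-equivariant, and `h : M × N → L` satisfies the usual axioms. -/
structure CrossedSquare (L M N P : Type*) [Group L] [Group M] [Group N] [Group P]
    [MulDistribMulAction P L] [MulDistribMulAction P M] [MulDistribMulAction P N] where
  lam : L →* M
  lam' : L →* N
  mu : M →* P
  nu : N →* P
  comm : ∀ l : L, mu (lam l) = nu (lam' l)
  mu_conj : ∀ (p : P) (m : M), mu (p • m) = p * mu m * p⁻¹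
  mu_peiffer : ∀ m m' : M, mu m • m' = m * m' * m⁻¹
  nu_conj : ∀ (p : P) (n : N), nu (p • n) = p * nu n * p⁻¹
  nu_peiffer : ∀ n n' : N, nu n • n' = n * n' * n⁻¹
  mulam_conj : ∀ (p : P) (l : L), mu (lam (p • l)) = p * mu (lam l) * p⁻¹
  mulam_peiffer : ∀ l l' : L, mu (lam l) • l' = l * l' * l⁻¹
  lam_conj : ∀ (m : M) (l : L), lam (mu m • l) = m * lam l * m⁻¹
  lam'_conj : ∀ (n : N) (l : L), lam' (nu n • l) = n * lam' l * n⁻¹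
  lam'_peiffer : ∀ l l' : L, nu (lam' l) • l' = l * l' * l⁻¹
  lam_equivariant : ∀ (p : P) (l : L), lam (p • l) = p • lam l
  lam'_equivariant : ∀ (p : P) (l : L), lam' (p • l) = p • lam' l
  h : M → N → L
  h_mul_left : ∀ (m m' : M) (n : N), h (m * m') n = h (mu m • m') (mu m • n) * h m n
  h_mul_right : ∀ (m : M) (n n' : N), h m (n * n') = h m n * h (nu n • m) (nu n • n')
  lam_h : ∀ (m : M) (n : N), lam (h m n) = m * (nu n • m)⁻¹
  lam'_h : ∀ (m : M) (n : N), lam' (h m n) = (mu m • n) * n⁻¹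
  h_lam : ∀ (l : L) (n : N), h (lam l) n = l * (nu n • l)⁻¹
  h_lam' : ∀ (m : M) (l : L), h m (lam' l) = (mu m • l) * l⁻¹
  h_equivariant : ∀ (p : P) (m : M) (n : N), h (p • m) (p • n) = p • h m n

/-- The Peiffer lifting `{(m,n),(c,a)} = h(m, n·a·n⁻¹)` on the mapping cone of a
crossed square. -/
def CrossedSquare.plift {L M N P : Type*} [Group L] [Group M] [Group N] [Group P]
    [MulDistribMulAction P L] [MulDistribMulAction P M] [MulDistribMulAction P N]
    (C : CrossedSquare L M N P)
    (x y : M ⋊[(MulDistribMulAction.toMulAut P M).comp C.nu] N) : L :=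
  C.h x.left (x.right * y.right * x.right⁻¹)

/-- The boundary `∂₂(l) = (λ(l)⁻¹, λ'(l))` of the mapping cone of a crossed square. -/
def CrossedSquare.cone2 {L M N P : Type*} [Group L] [Group M] [Group N] [Group P]
    [MulDistribMulAction P L] [MulDistribMulAction P M] [MulDistribMulAction P N]
    (C : CrossedSquare L M N P) (l : L) :
    M ⋊[(MulDistribMulAction.toMulAut P M).comp C.nu] N :=
  ⟨(C.lam l)⁻¹, C.lam' l⟩

namespace CrossedSquare

variable {L M N P : Type*} [Group L] [Group M] [Group N] [Group P]
  [MulDistribMulAction P L] [MulDistribMulAction P M] [MulDistribMulAction P N]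
  (C : CrossedSquare L M N P)

-- For `p = ν n`, the element `m * p • m'` is the `M`-component of `(m, n) * (m', n')` in `M ⋊ N`.
theorem h_mul_smul_smul (p : P) (m m' : M) (n : N) :
    C.h (m * p • m') (p • n) = (C.mu m * p) • C.h m' n * C.h m (p • n) := by
  rw [C.h_mul_left, ← mul_smul, ← mul_smul, C.h_equivariant]

theorem cone_mul_left (x y : M ⋊[(MulDistribMulAction.toMulAut P M).comp C.nu] N) :
    (x * y).left = x.left * C.nu x.right • y.left :=
  rfl

theorem cone_conj_right (x y : M ⋊[(MulDistribMulAction.toMulAut P M).comp C.nu] N) :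
    (x * y * x⁻¹).right = C.nu x.right • y.right :=
  (C.nu_peiffer x.right y.right).symm

theorem plift_eq_h_nu_smul (x y : M ⋊[(MulDistribMulAction.toMulAut P M).comp C.nu] N) :
    C.plift x y = C.h x.left (C.nu x.right • y.right) :=
  congrArg (C.h x.left) (C.cone_conj_right x y)

end CrossedSquare

/-- Axiom 2CM3(i) for the mapping cone of a crossed square:
`{x·x', x''} = (^{∂₁(x)}{x',x''})·{x, x'·x''·x'⁻¹}`. -/
theorem mapping_cone_2CM3i {L M N P : Type*} [Group L] [Group M] [Group N] [Group P]
    [MulDistribMulAction P L] [MulDistribMulAction P M] [MulDistribMulAction P N]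
    (C : CrossedSquare L M N P)
    (x x' x'' : M ⋊[(MulDistribMulAction.toMulAut P M).comp C.nu] N) :
    C.plift (x * x') x'' =
      ((C.mu x.left * C.nu x.right) • C.plift x' x'') *
        C.plift x (x' * x'' * x'⁻¹) := by
  calc C.plift (x * x') x''
      = C.h (x.left * C.nu x.right • x'.left)
          (C.nu x.right • C.nu x'.right • x''.right) := by
        rw [C.plift_eq_h_nu_smul, C.cone_mul_left, SemidirectProduct.mul_right, map_mul, mul_smul]
    _ = (C.mu x.left * C.nu x.right) • C.h x'.left (C.nu x'.right • x''.right) *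
          C.h x.left (C.nu x.right • C.nu x'.right • x''.right) :=
        C.h_mul_smul_smul ..
    _ = (C.mu x.left * C.nu x.right) • C.plift x' x'' * C.plift x (x' * x'' * x'⁻¹) := by
        rw [C.plift_eq_h_nu_smul x', C.plift_eq_h_nu_smul x, C.cone_conj_right]
end

section
/- Let (L,M,N,P,λ,λ',μ,ν,h) be a crossed square, with ∂₂ : L → M ⋊ N, ∂₂(l) = (λ(l)⁻¹, λ'(l)) (N acting on M via ν) and Peiffer lifting {(m,n),(c,a)} := h(m, n·a·n⁻¹). Then axiom 2CM3(ii) holds: for all x, x', x'' ∈ M ⋊ N, {x, x'·x''} = {x, x'}·{∂₂({x, x''}), x·x'·x⁻¹}·{x, x''} in L. -/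
/-!
By the right multiplicativity and the equivariance of `h`, `{x, x'·x''} = {x,x'}·ᵇ{x,x''}`, where
`b` is the `N`-component of `x·x'·x⁻¹`. On the other hand `{∂₂ l, y} = ᵇl·l⁻¹`, where `b` is the
`N`-component of `y`. For `l = {x,x''}` and `y = x·x'·x⁻¹`, this is the factor that turns `{x,x''}`
into `ᵇ{x,x''}`.
-/

namespace CrossedSquare

variable {L M N P : Type*} [Group L] [Group M] [Group N] [Group P]
  [MulDistribMulAction P L] [MulDistribMulAction P M] [MulDistribMulAction P N]
  (C : CrossedSquare L M N P)

theorem h_mul_right_eq_mul_smul (m : M) (n n' : N) :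
    C.h m (n * n') = C.h m n * C.nu n • C.h m n' := by
  rw [C.h_mul_right, C.h_equivariant]

theorem h_inv_lam (l : L) (n : N) : C.h (C.lam l)⁻¹ n = l⁻¹ * C.nu n • l := by
  rw [← map_inv, C.h_lam, smul_inv', inv_inv]

theorem nu_conj_lam'_smul_self (l : L) (n : N) :
    C.nu (C.lam' l * n * (C.lam' l)⁻¹) • l = l * C.nu n • l * l⁻¹ := by
  have smul_self : C.nu (C.lam' l)⁻¹ • l = l := by
    rw [map_inv, inv_smul_eq_iff, C.lam'_peiffer, mul_inv_cancel_right]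
  rw [map_mul, map_mul, mul_smul, mul_smul, smul_self, C.lam'_peiffer]

theorem plift_mul_right (x y z : M ⋊[(MulDistribMulAction.toMulAut P M).comp C.nu] N) :
    C.plift x (y * z) = C.plift x y * C.nu (x * y * x⁻¹).right • C.plift x z := by
  simp only [plift, SemidirectProduct.mul_right, SemidirectProduct.inv_right]
  rw [← conj_mul, C.h_mul_right_eq_mul_smul]

theorem plift_cone2_left (l : L)
    (y : M ⋊[(MulDistribMulAction.toMulAut P M).comp C.nu] N) :
    C.plift (C.cone2 l) y = C.nu y.right • l * l⁻¹ :=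
  calc C.plift (C.cone2 l) y
    _ = C.h (C.lam l)⁻¹ (C.lam' l * y.right * (C.lam' l)⁻¹) := rfl
    _ = l⁻¹ * C.nu (C.lam' l * y.right * (C.lam' l)⁻¹) • l := C.h_inv_lam l _
    _ = l⁻¹ * (l * C.nu y.right • l * l⁻¹) := by rw [C.nu_conj_lam'_smul_self]
    _ = C.nu y.right • l * l⁻¹ := by rw [mul_assoc l, inv_mul_cancel_left]

end CrossedSquare

/-- Axiom 2CM3(ii) for the mapping cone of a crossed square:
`{x, x'·x''} = {x,x'}·{∂₂({x,x''}), x·x'·x⁻¹}·{x,x''}`. -/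
theorem mapping_cone_2CM3ii {L M N P : Type*} [Group L] [Group M] [Group N] [Group P]
    [MulDistribMulAction P L] [MulDistribMulAction P M] [MulDistribMulAction P N]
    (C : CrossedSquare L M N P)
    (x x' x'' : M ⋊[(MulDistribMulAction.toMulAut P M).comp C.nu] N) :
    C.plift x (x' * x'') =
      C.plift x x' * C.plift (C.cone2 (C.plift x x'')) (x * x' * x⁻¹) *
        C.plift x x'' := by
  rw [C.plift_mul_right, C.plift_cone2_left, mul_assoc (C.plift x x'), inv_mul_cancel_right]
end
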